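/- Set q_j = (az_j−a⁻¹z_j⁻¹)/(az_j⁻¹−a⁻¹z_j) for j = 1,…,N, Δ = −(a²+a⁻²)/2, and p′ = −(b+b⁻¹)(a²−a⁻²)/(2(b−b⁻¹)), assuming b² ≠ 1 and az_j⁻¹−a⁻¹z_j ≠ 0 for all j. Then the homogeneous symmetric function factorizes as F_{M,N}(z_1,…,z_N|1,…,1|x_1,…,x_N) = (b−b⁻¹)^N ∏_{1≤j<k≤N} [(a²+a⁻²−z_j²−z_j⁻²)(a²+a⁻²−z_k²−z_k⁻²)] / [(a²−a⁻²)²(z_k²+z_k⁻²−z_j²−z_j⁻²)] × ∏_{j=1}^N [(−a²z_j²+a⁻²z_j⁻²)(a²+a⁻²−z_j²−z_j⁻²)^M / (z_j²−z_j⁻²)] × f_{M,N}, where f_{M,N} = Σ_{σ∈S_N} Σ_{τ∈{±1}^N} sgn(σ)(−1)^{|τ|} ∏_{1≤j<k≤N} (1−2Δ q_{σ(j)}^{τ_{σ(j)}} + q_{σ(j)}^{τ_{σ(j)}} q_{σ(k)}^{−τ_{σ(k)}})(1−2Δ q_{σ(k)}^{τ_{σ(k)}} + q_{σ(j)}^{τ_{σ(j)}}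 q_{σ(k)}^{τ_{σ(k)}}) q_{σ(j)}^{−τ_{σ(j)}} × ∏_{k=1}^N q_{σ(k)}^{−τ_{σ(k)} x_k} (1+(p′−Δ) q_{σ(k)}^{τ_{σ(k)}}), and |τ| denotes the number of indices j with τ_j = −1. -/

import Mathlib

open Finset

def eps {N : ℕ} (τ : Fin N → Bool) (j : Fin N) : ℤ := if τ j then 1 else -1

noncomputable def pairFactor (a Z1 Z2 : ℂ) (t1 t2 : ℤ) : ℂ :=
  ((a ^ (2:ℤ) * Z1 ^ t1 * Z2 ^ t2 - a ^ (-2:ℤ) * Z1 ^ (-t1) * Z2 ^ (-t2)) *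
   (a ^ (2:ℤ) * Z1 ^ (-t1) * Z2 ^ t2 - a ^ (-2:ℤ) * Z1 ^ t1 * Z2 ^ (-t2))) /
  ((Z1 ^ t1 * Z2 ^ t2 - Z1 ^ (-t1) * Z2 ^ (-t2)) *
   (Z1 ^ (-t1) * Z2 ^ t2 - Z1 ^ t1 * Z2 ^ (-t2)))

/-- The symmetric function `F_{M,N}(z_1,…,z_N|w_1,…,w_M|x_1,…,x_N)`,
where `x k` for `k = 0,…,N-1` encodes `x_{k+1}`. -/
noncomputable def FF (a b : ℂ) (M N : ℕ) (z : Fin N → ℂ) (w : Fin M → ℂ) (x : ℕ → ℕ) : ℂ :=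
  (a ^ (2:ℤ) - a ^ (-2:ℤ)) ^ N *
  (∏ j, (-(a ^ (2:ℤ) * z j ^ (2:ℤ)) + a ^ (-2:ℤ) * z j ^ (-2:ℤ))) *
  ∑ σ : Equiv.Perm (Fin N), ∑ τ : Fin N → Bool,
    (∏ j, (z j ^ (2 * eps τ j) - z j ^ (-(2 * eps τ j)))⁻¹) *
    (∏ p ∈ Finset.univ.filter (fun p : Fin N × Fin N => p.1 < p.2),
      pairFactor a (z (σ p.1)) (z (σ p.2)) (eps τ (σ p.1)) (eps τ (σ p.2))) *
    (∏ k, (b * a⁻¹ * z (σ k) ^ (-(eps τ (σ k))) - b⁻¹ * a * z (σ k) ^ (eps τ (σ k)))) *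
    (∏ k, ∏ j : Fin M, (a * z (σ k) ^ (-(eps τ (σ k))) - a⁻¹ * z (σ k) ^ (eps τ (σ k)) * w j)) *
    (∏ k : Fin N, ∏ j ∈ Finset.univ.filter (fun j : Fin M => (j : ℕ) + 1 < x k.val),
      (a * z (σ k) ^ (-(eps τ (σ k))) * w j - a⁻¹ * z (σ k) ^ (eps τ (σ k)))) *
    (∏ k : Fin N, ∏ j ∈ Finset.univ.filter (fun j : Fin M => x k.val ≤ (j : ℕ)),
      (a * z (σ k) ^ (eps τ (σ k)) - a⁻¹ * z (σ k) ^ (-(eps τ (σ k))) * w j))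

/-- The dual symmetric function `F̄_{M,N}(z_1,…,z_N|w_1,…,w_M|x̄_1,…,x̄_N)`. -/
noncomputable def FBar (a b : ℂ) (M N : ℕ) (z : Fin N → ℂ) (w : Fin M → ℂ) (x : ℕ → ℕ) : ℂ :=
  (a ^ (2:ℤ) - a ^ (-2:ℤ)) ^ N *
  (∏ j, (-(a ^ (2:ℤ) * z j ^ (2:ℤ)) + a ^ (-2:ℤ) * z j ^ (-2:ℤ))) *
  ∑ σ : Equiv.Perm (Fin N), ∑ τ : Fin N → Bool,
    (∏ j, (z j ^ (2 * eps τ j) - z j ^ (-(2 * eps τ j)))⁻¹) *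
    (∏ p ∈ Finset.univ.filter (fun p : Fin N × Fin N => p.1 < p.2),
      pairFactor a (z (σ p.1)) (z (σ p.2)) (eps τ (σ p.1)) (eps τ (σ p.2))) *
    (∏ k, (b * a * z (σ k) ^ (eps τ (σ k)) - b⁻¹ * a⁻¹ * z (σ k) ^ (-(eps τ (σ k))))) *
    (∏ k, ∏ j : Fin M, (a * z (σ k) ^ (-(eps τ (σ k))) * w j - a⁻¹ * z (σ k) ^ (eps τ (σ k)))) *
    (∏ k : Fin N, ∏ j ∈ Finset.univ.filter (fun j : Fin M => (j : ℕ) + 1 < x k.val),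
      (a * z (σ k) ^ (-(eps τ (σ k))) - a⁻¹ * z (σ k) ^ (eps τ (σ k)) * w j)) *
    (∏ k : Fin N, ∏ j ∈ Finset.univ.filter (fun j : Fin M => x k.val ≤ (j : ℕ)),
      (a * z (σ k) ^ (eps τ (σ k)) * w j - a⁻¹ * z (σ k) ^ (-(eps τ (σ k)))))

/-- `xfun T k` is the `(k+1)`-st smallest element of `T`, in 1-based labelling. -/
def xfun {M : ℕ} (T : Finset (Fin M)) (k : ℕ) : ℕ :=
  ((T.sort (· ≤ ·)).map (fun j : Fin M => (j : ℕ) + 1)).getD k 0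

/-- `q_j = (az_j − a⁻¹z_j⁻¹)/(az_j⁻¹ − a⁻¹z_j)`, the Bethe-ansatz momentum variable
`e^{iK_j}`. -/
noncomputable def qq (a z : ℂ) : ℂ := (a * z - a⁻¹ * z⁻¹) / (a * z⁻¹ - a⁻¹ * z)

/-- The anisotropy parameter `Δ = −(a²+a⁻²)/2` of the open XXZ chain. -/
noncomputable def Delta (a : ℂ) : ℂ := -((a ^ (2:ℤ) + a ^ (-2:ℤ)) / 2)

/-- The boundary parameter `p′ = −(b+b⁻¹)(a²−a⁻²)/(2(b−b⁻¹))` of the open XXZ chain. -/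
noncomputable def pprime (a b : ℂ) : ℂ :=
  -((b + b⁻¹) * (a ^ (2:ℤ) - a ^ (-2:ℤ)) / (2 * (b - b⁻¹)))

/-- The coordinate Bethe ansatz wavefunction `f_{M,N}(K_1,…,K_N|x_1,…,x_N)` of
Alcaraz-Barber-Batchelor-Baxter-Quispel for the open XXZ chain, written in the
variables `q_j = e^{iK_j}`; `(−1)^{|τ|}` is the sign coming from the number of
negated momenta. -/
noncomputable def fABBBQ (a b : ℂ) (N : ℕ) (z : Fin N → ℂ) (x : ℕ → ℕ) : ℂ :=
  ∑ σ : Equiv.Perm (Fin N), ∑ τ : Fin N → Bool,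
    ((Equiv.Perm.sign σ : ℤ) : ℂ) *
    (-1 : ℂ) ^ (Finset.univ.filter (fun j => τ j = false)).card *
    (∏ p ∈ Finset.univ.filter (fun p : Fin N × Fin N => p.1 < p.2),
      (1 - 2 * Delta a * qq a (z (σ p.1)) ^ eps τ (σ p.1)
          + qq a (z (σ p.1)) ^ eps τ (σ p.1) * qq a (z (σ p.2)) ^ (-(eps τ (σ p.2)))) *
      (1 - 2 * Delta a * qq a (z (σ p.2)) ^ eps τ (σ p.2)
          + qq a (z (σ p.1)) ^ eps τ (σ p.1) * qq a (z (σ p.2)) ^ eps τ (σ p.2)) *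
      qq a (z (σ p.1)) ^ (-(eps τ (σ p.1)))) *
    (∏ k : Fin N,
      qq a (z (σ k)) ^ (-(eps τ (σ k)) * (x k.val : ℤ)) *
      (1 + (pprime a b - Delta a) * qq a (z (σ k)) ^ eps τ (σ k)))


noncomputable def sm (z : ℂ) : ℂ := z ^ (2:ℤ) + z ^ (-2:ℤ)

noncomputable def DD (a z1 z2 : ℂ) : ℂ :=
  ((a ^ (2:ℤ) + a ^ (-2:ℤ) - z1 ^ (2:ℤ) - z1 ^ (-2:ℤ)) *
         (a ^ (2:ℤ) + a ^ (-2:ℤ) - z2 ^ (2:ℤ) - z2 ^ (-2:ℤ))) /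
        ((a ^ (2:ℤ) - a ^ (-2:ℤ)) ^ 2 *
         (z2 ^ (2:ℤ) + z2 ^ (-2:ℤ) - z1 ^ (2:ℤ) - z1 ^ (-2:ℤ)))

lemma DD_anti (a z1 z2 : ℂ) : DD a z1 z2 = - DD a z2 z1 := by
  unfold DD
  rw [← div_neg]
  congr 1 <;> ring

lemma DD_inv_left (a z1 z2 : ℂ) : DD a z1⁻¹ z2 = DD a z1 z2 := by
  unfold DD
  simp only [inv_zpow', neg_neg]
  congr 1 <;> ring

lemma DD_inv_right (a z1 z2 : ℂ) : DD a z1 z2⁻¹ = DD a z1 z2 := by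
  unfold DD
  simp only [inv_zpow', neg_neg]
  congr 1 <;> ring

lemma qq_inv (a z : ℂ) : (qq a z)⁻¹ = qq a z⁻¹ := by
  unfold qq; rw [inv_div, inv_inv]

noncomputable def PR (a q1 q2 : ℂ) : ℂ :=
  (1 - 2 * Delta a * q1 + q1 * q2⁻¹) * (1 - 2 * Delta a * q2 + q1 * q2) * q1⁻¹

lemma a_sub_ne (a : ℂ) (ha : a ≠ 0) (ha4 : a ^ 4 ≠ 1) : a ^ 2 - (a ^ 2)⁻¹ ≠ 0 := by
  intro h
  apply ha4
  field_simp at h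
  linear_combination h

lemma pair_core (a Z1 Z2 : ℂ) (ha : a ≠ 0) (ha4 : a ^ 4 ≠ 1) (h1 : Z1 ≠ 0) (h2 : Z2 ≠ 0)
    (hB1 : a * Z1⁻¹ - a⁻¹ * Z1 ≠ 0) (hA1 : a * Z1 - a⁻¹ * Z1⁻¹ ≠ 0)
    (hB2 : a * Z2⁻¹ - a⁻¹ * Z2 ≠ 0) (hA2 : a * Z2 - a⁻¹ * Z2⁻¹ ≠ 0) :
    pairFactor a Z1 Z2 1 1 = DD a Z1 Z2 * PR a (qq a Z1) (qq a Z2) := by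
  have hs := a_sub_ne a ha ha4
  have e2 : ∀ z : ℂ, z ^ (2:ℤ) = z ^ 2 := fun z => by norm_cast
  have e2' : ∀ z : ℂ, z ^ (-2:ℤ) = (z ^ 2)⁻¹ := fun z => by rw [zpow_neg, e2]
  have hP : PR a (qq a Z1) (qq a Z2) = (a ^ 2 - (a ^ 2)⁻¹) ^ 2 *
      ((a ^ 2 * Z1 * Z2 - (a ^ 2)⁻¹ * Z1⁻¹ * Z2⁻¹) * (a ^ 2 * Z1⁻¹ * Z2 - (a ^ 2)⁻¹ * Z1 * Z2⁻¹)) /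
      ((a * Z1 - a⁻¹ * Z1⁻¹) * (a * Z1⁻¹ - a⁻¹ * Z1) *
       ((a * Z2 - a⁻¹ * Z2⁻¹) * (a * Z2⁻¹ - a⁻¹ * Z2))) := by
    have f1 : 1 - 2 * Delta a * qq a Z1 + qq a Z1 * (qq a Z2)⁻¹ =
        (a ^ 2 - (a ^ 2)⁻¹) * (a ^ 2 * Z1 * Z2 - (a ^ 2)⁻¹ * Z1⁻¹ * Z2⁻¹) /
        ((a * Z1⁻¹ - a⁻¹ * Z1) * (a * Z2 - a⁻¹ * Z2⁻¹)) := by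
      unfold qq Delta
      rw [e2, e2', eq_div_iff (mul_ne_zero hB1 hA2), inv_div]
      generalize hb1 : a * Z1⁻¹ - a⁻¹ * Z1 = B1 at *
      generalize ha2 : a * Z2 - a⁻¹ * Z2⁻¹ = A2 at *
      have : ∀ X Y k : ℂ, (1 - k * (X / B1) + X / B1 * (Y / A2)) * (B1 * A2)
          = B1 * A2 - k * X * A2 + X * Y := by
        intro X Y k; field_simp
      rw [this, ← hb1, ← ha2]
      field_simp
      ring
    have f2 : 1 - 2 * Delta a * qq a Z2 + qq a Z1 * qq a Z2 =
        (a ^ 2 - (a ^ 2)⁻¹) * (a ^ 2 * Z1⁻¹ * Z2 - (a ^ 2)⁻¹ * Z1 * Z2⁻¹) /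
        ((a * Z1⁻¹ - a⁻¹ * Z1) * (a * Z2⁻¹ - a⁻¹ * Z2)) := by
      unfold qq Delta
      rw [e2, e2', eq_div_iff (mul_ne_zero hB1 hB2)]
      generalize hb1 : a * Z1⁻¹ - a⁻¹ * Z1 = B1 at *
      generalize hb2 : a * Z2⁻¹ - a⁻¹ * Z2 = B2 at *
      have : ∀ X Y k : ℂ, (1 - k * (Y / B2) + X / B1 * (Y / B2)) * (B1 * B2)
          = B1 * B2 - k * Y * B1 + X * Y := by
        intro X Y k; field_simp
      rw [this, ← hb1, ← hb2]
      field_simp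
      ring
    unfold PR
    rw [f1, f2, qq, inv_div]
    generalize a * Z1⁻¹ - a⁻¹ * Z1 = B1 at *
    generalize a * Z2 - a⁻¹ * Z2⁻¹ = A2 at *
    generalize a * Z2⁻¹ - a⁻¹ * Z2 = B2 at *
    generalize a * Z1 - a⁻¹ * Z1⁻¹ = A1 at *
    generalize a ^ 2 * Z1 * Z2 - (a ^ 2)⁻¹ * Z1⁻¹ * Z2⁻¹ = U
    generalize a ^ 2 * Z1⁻¹ * Z2 - (a ^ 2)⁻¹ * Z1 * Z2⁻¹ = V
    field_simp
  rw [hP]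
  unfold pairFactor DD
  simp only [e2, e2', zpow_neg, zpow_one]
  have g : ∀ Z : ℂ, Z ≠ 0 → a ^ 2 + (a ^ 2)⁻¹ - Z ^ 2 - (Z ^ 2)⁻¹ =
      (a * Z - a⁻¹ * Z⁻¹) * (a * Z⁻¹ - a⁻¹ * Z) := by
    intro Z hZ; field_simp; ring
  have d : Z2 ^ 2 + (Z2 ^ 2)⁻¹ - Z1 ^ 2 - (Z1 ^ 2)⁻¹ =
      (Z1 * Z2 - Z1⁻¹ * Z2⁻¹) * (Z1⁻¹ * Z2 - Z1 * Z2⁻¹) := by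
    field_simp; ring
  rw [g _ h1, g _ h2, d]
  generalize a * Z1⁻¹ - a⁻¹ * Z1 = B1 at *
  generalize a * Z2 - a⁻¹ * Z2⁻¹ = A2 at *
  generalize a * Z2⁻¹ - a⁻¹ * Z2 = B2 at *
  generalize a * Z1 - a⁻¹ * Z1⁻¹ = A1 at *
  generalize a ^ 2 * Z1 * Z2 - (a ^ 2)⁻¹ * Z1⁻¹ * Z2⁻¹ = U
  generalize a ^ 2 * Z1⁻¹ * Z2 - (a ^ 2)⁻¹ * Z1 * Z2⁻¹ = V
  generalize a ^ 2 - (a ^ 2)⁻¹ = s at *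
  generalize (Z1 * Z2 - Z1⁻¹ * Z2⁻¹) * (Z1⁻¹ * Z2 - Z1 * Z2⁻¹) = W
  rw [div_mul_div_comm]
  have hk : A1 * B1 * (A2 * B2) * s ^ 2 ≠ 0 := by simp [*]
  rw [show A1 * B1 * (A2 * B2) * (s ^ 2 * (U * V)) = (A1 * B1 * (A2 * B2) * s ^ 2) * (U * V) by ring,
    show s ^ 2 * W * (A1 * B1 * (A2 * B2)) = (A1 * B1 * (A2 * B2) * s ^ 2) * W by ring,
    mul_div_mul_left _ _ hk]

lemma pair_eps (a z1 z2 : ℂ) (t1 t2 : ℤ) (ht1 : t1 = 1 ∨ t1 = -1) (ht2 : t2 = 1 ∨ t2 = -1)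
    (ha : a ≠ 0) (ha4 : a ^ 4 ≠ 1) (h1 : z1 ≠ 0) (h2 : z2 ≠ 0)
    (hB1 : a * z1⁻¹ - a⁻¹ * z1 ≠ 0) (hA1 : a * z1 - a⁻¹ * z1⁻¹ ≠ 0)
    (hB2 : a * z2⁻¹ - a⁻¹ * z2 ≠ 0) (hA2 : a * z2 - a⁻¹ * z2⁻¹ ≠ 0) :
    pairFactor a z1 z2 t1 t2 = DD a z1 z2 * PR a (qq a z1 ^ t1) (qq a z2 ^ t2) := by
  have i1 : z1⁻¹ ≠ 0 := inv_ne_zero h1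
  have i2 : z2⁻¹ ≠ 0 := inv_ne_zero h2
  rcases ht1 with rfl | rfl <;> rcases ht2 with rfl | rfl
  · simpa using pair_core a z1 z2 ha ha4 h1 h2 hB1 hA1 hB2 hA2
  · have := pair_core a z1 z2⁻¹ ha ha4 h1 i2 hB1 hA1 (by rwa [inv_inv]) (by rwa [inv_inv])
    rw [DD_inv_right, ← qq_inv] at this
    simp only [zpow_neg, zpow_one]
    rw [← this]; simp [pairFactor]
  · have := pair_core a z1⁻¹ z2 ha ha4 i1 h2 (by rwa [inv_inv]) (by rwa [inv_inv]) hB2 hA2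
    rw [DD_inv_left, ← qq_inv] at this
    simp only [zpow_neg, zpow_one]
    rw [← this]; simp [pairFactor]
  · have := pair_core a z1⁻¹ z2⁻¹ ha ha4 i1 i2 (by rwa [inv_inv]) (by rwa [inv_inv])
      (by rwa [inv_inv]) (by rwa [inv_inv])
    rw [DD_inv_left, DD_inv_right, ← qq_inv, ← qq_inv] at this
    simp only [zpow_neg, zpow_one]
    rw [← this]; simp [pairFactor]

lemma single_core (a b Z : ℂ) (M x : ℕ) (ha : a ≠ 0) (hb : b ≠ 0) (hb2 : b ^ 2 ≠ 1)
    (h : Z ≠ 0) (hB : a * Z⁻¹ - a⁻¹ * Z ≠ 0) (hA : a * Z - a⁻¹ * Z⁻¹ ≠ 0)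
    (hx1 : 1 ≤ x) (hxM : x ≤ M) :
    (a ^ (2:ℤ) - a ^ (-2:ℤ)) * ((b * a⁻¹ * Z⁻¹ - b⁻¹ * a * Z) *
      (a * Z⁻¹ - a⁻¹ * Z) ^ M * (a * Z⁻¹ - a⁻¹ * Z) ^ (x - 1) *
      (a * Z - a⁻¹ * Z⁻¹) ^ (M - x)) =
    (b - b⁻¹) * (a ^ (2:ℤ) + a ^ (-2:ℤ) - Z ^ (2:ℤ) - Z ^ (-2:ℤ)) ^ M *
      (qq a Z ^ (-(x:ℤ)) * (1 + (pprime a b - Delta a) * qq a Z)) := by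
  have e2 : ∀ z : ℂ, z ^ (2:ℤ) = z ^ 2 := fun z => by norm_cast
  have e2' : ∀ z : ℂ, z ^ (-2:ℤ) = (z ^ 2)⁻¹ := fun z => by rw [zpow_neg, e2]
  have hbs : b - b⁻¹ ≠ 0 := by
    intro h; apply hb2; field_simp at h; linear_combination h
  have g : a ^ (2:ℤ) + a ^ (-2:ℤ) - Z ^ (2:ℤ) - Z ^ (-2:ℤ) =
      (a * Z - a⁻¹ * Z⁻¹) * (a * Z⁻¹ - a⁻¹ * Z) := by
    rw [e2, e2', e2, e2']; field_simp; ring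
  have hp : (b - b⁻¹) * (pprime a b - Delta a) = b * (a ^ 2)⁻¹ - b⁻¹ * a ^ 2 := by
    unfold pprime Delta
    rw [e2, e2', mul_sub, mul_neg, mul_div_assoc', mul_comm (2:ℂ), mul_div_mul_left _ _ hbs]
    ring
  have hs : (a ^ (2:ℤ) - a ^ (-2:ℤ)) * (b * a⁻¹ * Z⁻¹ - b⁻¹ * a * Z) =
      (b - b⁻¹) * (1 + (pprime a b - Delta a) * qq a Z) * (a * Z⁻¹ - a⁻¹ * Z) := by
    have : (b - b⁻¹) * (1 + (pprime a b - Delta a) * qq a Z) * (a * Z⁻¹ - a⁻¹ * Z) =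
      (b - b⁻¹) * (a * Z⁻¹ - a⁻¹ * Z) + (b * (a ^ 2)⁻¹ - b⁻¹ * a ^ 2) * (a * Z - a⁻¹ * Z⁻¹) := by
      rw [← hp, qq, mul_add, add_mul, mul_one, add_right_inj, ← mul_assoc, mul_assoc,
        div_mul_cancel₀ _ hB]
    rw [this, e2, e2']
    field_simp
    ring
  have hq : qq a Z ^ (-(x:ℤ)) * (a * Z - a⁻¹ * Z⁻¹) ^ x = (a * Z⁻¹ - a⁻¹ * Z) ^ x := by
    rw [zpow_neg, zpow_natCast, qq, div_pow, inv_div, div_mul_cancel₀ _ (pow_ne_zero _ hA)]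
  rw [g]
  obtain ⟨y, rfl⟩ : ∃ y, x = y + 1 := ⟨x - 1, by omega⟩
  obtain ⟨m, rfl⟩ := Nat.exists_eq_add_of_le hxM
  rw [show y + 1 + m - (y + 1) = m by omega, show y + 1 - 1 = y by omega, mul_pow]
  generalize a * Z⁻¹ - a⁻¹ * Z = B at *
  generalize a * Z - a⁻¹ * Z⁻¹ = A at *
  generalize qq a Z ^ (-((y + 1 : ℕ):ℤ)) = Q at *
  rw [show A ^ (y + 1 + m) = A ^ (y + 1) * A ^ m from pow_add _ _ _]
  calc _ = ((a ^ (2:ℤ) - a ^ (-2:ℤ)) * (b * a⁻¹ * Z⁻¹ - b⁻¹ * a * Z)) *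
        B ^ (y + 1 + m) * B ^ y * A ^ m := by ring
    _ = ((b - b⁻¹) * (1 + (pprime a b - Delta a) * qq a Z)) * B ^ (y + 1 + m) * A ^ m *
        B ^ (y + 1) := by rw [hs]; ring
    _ = _ := by rw [← hq]; ring

lemma single_eps (a b z : ℂ) (M x : ℕ) (t : ℤ) (ht : t = 1 ∨ t = -1)
    (ha : a ≠ 0) (hb : b ≠ 0) (hb2 : b ^ 2 ≠ 1)
    (h : z ≠ 0) (hB : a * z⁻¹ - a⁻¹ * z ≠ 0) (hA : a * z - a⁻¹ * z⁻¹ ≠ 0)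
    (hx1 : 1 ≤ x) (hxM : x ≤ M) :
    (a ^ (2:ℤ) - a ^ (-2:ℤ)) * ((z ^ (2 * t) - z ^ (-(2 * t)))⁻¹ *
      (b * a⁻¹ * z ^ (-t) - b⁻¹ * a * z ^ t) *
      (a * z ^ (-t) - a⁻¹ * z ^ t) ^ M * (a * z ^ (-t) - a⁻¹ * z ^ t) ^ (x - 1) *
      (a * z ^ t - a⁻¹ * z ^ (-t)) ^ (M - x)) =
    (b - b⁻¹) * ((a ^ (2:ℤ) + a ^ (-2:ℤ) - z ^ (2:ℤ) - z ^ (-2:ℤ)) ^ M /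
        (z ^ (2:ℤ) - z ^ (-2:ℤ))) *
      ((t : ℂ) * (qq a z ^ (-t * (x:ℤ)) * (1 + (pprime a b - Delta a) * qq a z ^ t))) := by
  rcases ht with rfl | rfl
  · have := single_core a b z M x ha hb hb2 h hB hA hx1 hxM
    simp only [mul_one, zpow_neg, zpow_one, neg_mul, one_mul, Int.cast_one] at this ⊢
    linear_combination (z ^ (2:ℤ) - (z ^ (2:ℤ))⁻¹)⁻¹ * this
  · have := single_core a b z⁻¹ M x ha hb hb2 (inv_ne_zero h) (by rwa [inv_inv])
      (by rwa [inv_inv]) hx1 hxM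
    rw [← qq_inv] at this
    simp only [mul_one, zpow_neg, zpow_one, neg_mul, one_mul, Int.cast_one, inv_inv, inv_zpow,
      mul_neg, neg_neg, Int.cast_neg] at this ⊢
    have e : ((z ^ (2:ℤ))⁻¹ - z ^ (2:ℤ))⁻¹ = -(z ^ (2:ℤ) - (z ^ (2:ℤ))⁻¹)⁻¹ := by
      rw [← inv_neg, neg_sub]
    rw [e]
    linear_combination -(z ^ (2:ℤ) - (z ^ (2:ℤ))⁻¹)⁻¹ * this

lemma card_lt (M x : ℕ) (hxM : x ≤ M) (hx1 : 1 ≤ x) :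
    (Finset.univ.filter (fun j : Fin M => (j : ℕ) + 1 < x)).card = x - 1 := by
  rw [show (Finset.univ.filter (fun j : Fin M => (j : ℕ) + 1 < x)) =
    (Finset.univ.filter (fun j : Fin M => (j : ℕ) < x - 1)) by
      ext j; simp; omega]
  rw [Fin.card_filter_val_lt]; omega

lemma card_ge (M x : ℕ) (hxM : x ≤ M) :
    (Finset.univ.filter (fun j : Fin M => x ≤ (j : ℕ))).card = M - x := by
  have h := Finset.card_filter_add_card_filter_not (s := (Finset.univ : Finset (Fin M)))
    (fun j : Fin M => (j : ℕ) < x)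
  rw [Fin.card_filter_val_lt] at h
  simp only [not_lt, Finset.card_univ, Fintype.card_fin] at h
  omega

lemma prod_lt_eq (N : ℕ) (f : Fin N → Fin N → ℂ) :
    ∏ p ∈ Finset.univ.filter (fun p : Fin N × Fin N => p.1 < p.2), f p.1 p.2 =
    ∏ j, ∏ i ∈ Finset.Iio j, f i j := by
  rw [Finset.prod_filter, Fintype.prod_prod_type, Finset.prod_comm]
  refine Finset.prod_congr rfl fun j _ => ?_
  rw [← Finset.prod_filter]
  refine Finset.prod_congr ?_ fun _ _ => rfl
  ext i; simp

lemma DD_perm (a : ℂ) (N : ℕ) (z : Fin N → ℂ) (σ : Equiv.Perm (Fin N)) :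
    ∏ p ∈ Finset.univ.filter (fun p : Fin N × Fin N => p.1 < p.2), DD a (z (σ p.1)) (z (σ p.2)) =
    ((Equiv.Perm.sign σ : ℤ) : ℂ) *
    ∏ p ∈ Finset.univ.filter (fun p : Fin N × Fin N => p.1 < p.2), DD a (z p.1) (z p.2) := by
  rw [prod_lt_eq N (fun i j => DD a (z (σ i)) (z (σ j))), prod_lt_eq N (fun i j => DD a (z i) (z j))]
  exact Equiv.Perm.prod_Iio_comp_eq_sign_mul_prod
    (f := fun i j => DD a (z i) (z j)) σ (fun i j => DD_anti _ _ _)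

lemma eps_or {N : ℕ} (τ : Fin N → Bool) (j : Fin N) : eps τ j = 1 ∨ eps τ j = -1 := by
  unfold eps; split_ifs <;> simp

lemma prod_eps {N : ℕ} (τ : Fin N → Bool) :
    (-1 : ℂ) ^ (Finset.univ.filter (fun j => τ j = false)).card = ∏ j, ((eps τ j : ℤ) : ℂ) := by
  rw [← Finset.prod_const, Finset.prod_filter]
  refine Finset.prod_congr rfl fun j _ => ?_
  unfold eps
  cases τ j <;> simp

/-- Equation (5.13): the homogeneous limit `w_1 = ⋯ = w_M = 1` of the symmetric
function `F_{M,N}` factorizes into explicit prefactors times the coordinate Bethe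
ansatz wavefunction of the open XXZ chain of
Alcaraz-Barber-Batchelor-Baxter-Quispel. -/
theorem F_homogeneous_eq_ABBBQ (a b : ℂ) (M N : ℕ)
    (z : Fin N → ℂ) (x : ℕ → ℕ)
    (ha : a ≠ 0) (hb : b ≠ 0) (ha4 : a ^ 4 ≠ 1) (hb2 : b ^ 2 ≠ 1)
    (hz : ∀ j, z j ≠ 0) (hz4 : ∀ j, z j ^ 4 ≠ 1)
    (hzz : ∀ j k, j ≠ k → z j ^ 2 * z k ^ 2 ≠ 1)
    (hzz' : ∀ j k, j ≠ k → z j ^ 2 ≠ z k ^ 2)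
    (hden : ∀ j, a * (z j)⁻¹ - a⁻¹ * z j ≠ 0)
    (hx1 : ∀ k : Fin N, 1 ≤ x k.val) (hxM : ∀ k : Fin N, x k.val ≤ M)
    (hmono : ∀ j k : Fin N, j < k → x j.val < x k.val) :
    FF a b M N z (fun _ => (1 : ℂ)) x
    = (b - b⁻¹) ^ N *
      (∏ p ∈ Finset.univ.filter (fun p : Fin N × Fin N => p.1 < p.2),
        ((a ^ (2:ℤ) + a ^ (-2:ℤ) - z p.1 ^ (2:ℤ) - z p.1 ^ (-2:ℤ)) *
         (a ^ (2:ℤ) + a ^ (-2:ℤ) - z p.2 ^ (2:ℤ) - z p.2 ^ (-2:ℤ))) /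
        ((a ^ (2:ℤ) - a ^ (-2:ℤ)) ^ 2 *
         (z p.2 ^ (2:ℤ) + z p.2 ^ (-2:ℤ) - z p.1 ^ (2:ℤ) - z p.1 ^ (-2:ℤ)))) *
      (∏ j, (-(a ^ (2:ℤ) * z j ^ (2:ℤ)) + a ^ (-2:ℤ) * z j ^ (-2:ℤ)) *
        (a ^ (2:ℤ) + a ^ (-2:ℤ) - z j ^ (2:ℤ) - z j ^ (-2:ℤ)) ^ M /
        (z j ^ (2:ℤ) - z j ^ (-2:ℤ))) *
      fABBBQ a b N z x := by
  classical
  by_cases hA : ∀ j, a * z j - a⁻¹ * (z j)⁻¹ ≠ 0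
  · unfold FF fABBBQ
    simp only [Finset.mul_sum]
    refine Finset.sum_congr rfl fun σ _ => Finset.sum_congr rfl fun τ _ => ?_
    have hpair : ∏ p ∈ Finset.univ.filter (fun p : Fin N × Fin N => p.1 < p.2),
        pairFactor a (z (σ p.1)) (z (σ p.2)) (eps τ (σ p.1)) (eps τ (σ p.2)) =
        (((Equiv.Perm.sign σ : ℤ) : ℂ) *
          ∏ p ∈ Finset.univ.filter (fun p : Fin N × Fin N => p.1 < p.2), DD a (z p.1) (z p.2)) *
        ∏ p ∈ Finset.univ.filter (fun p : Fin N × Fin N => p.1 < p.2),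
          PR a (qq a (z (σ p.1)) ^ eps τ (σ p.1)) (qq a (z (σ p.2)) ^ eps τ (σ p.2)) := by
      rw [← DD_perm, ← Finset.prod_mul_distrib]
      exact Finset.prod_congr rfl fun p _ => pair_eps a _ _ _ _ (eps_or _ _) (eps_or _ _) ha ha4
        (hz _) (hz _) (hden _) (hA _) (hden _) (hA _)
    have hsingle : (a ^ (2:ℤ) - a ^ (-2:ℤ)) ^ N *
        ((∏ j, (z j ^ (2 * eps τ j) - z j ^ (-(2 * eps τ j)))⁻¹) *
        (∏ k, (b * a⁻¹ * z (σ k) ^ (-(eps τ (σ k))) - b⁻¹ * a * z (σ k) ^ (eps τ (σ k)))) *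
        (∏ k, (a * z (σ k) ^ (-(eps τ (σ k))) - a⁻¹ * z (σ k) ^ (eps τ (σ k))) ^ M) *
        (∏ k : Fin N, (a * z (σ k) ^ (-(eps τ (σ k))) - a⁻¹ * z (σ k) ^ (eps τ (σ k)))
          ^ (x k.val - 1)) *
        (∏ k : Fin N, (a * z (σ k) ^ (eps τ (σ k)) - a⁻¹ * z (σ k) ^ (-(eps τ (σ k))))
          ^ (M - x k.val))) =
        (b - b⁻¹) ^ N * (∏ j, (a ^ (2:ℤ) + a ^ (-2:ℤ) - z j ^ (2:ℤ) - z j ^ (-2:ℤ)) ^ M /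
          (z j ^ (2:ℤ) - z j ^ (-2:ℤ))) *
        ((∏ j, ((eps τ j : ℤ) : ℂ)) * (∏ k : Fin N,
          qq a (z (σ k)) ^ (-(eps τ (σ k)) * (x k.val : ℤ)) *
          (1 + (pprime a b - Delta a) * qq a (z (σ k)) ^ eps τ (σ k)))) := by
      rw [← Equiv.prod_comp σ (fun j => (z j ^ (2 * eps τ j) - z j ^ (-(2 * eps τ j)))⁻¹),
        ← Equiv.prod_comp σ (fun j => ((eps τ j : ℤ) : ℂ)),
        ← Equiv.prod_comp σ (fun j => (a ^ (2:ℤ) + a ^ (-2:ℤ) - z j ^ (2:ℤ) - z j ^ (-2:ℤ)) ^ M /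
          (z j ^ (2:ℤ) - z j ^ (-2:ℤ)))]
      have hc : ∀ c : ℂ, c ^ N = ∏ _k : Fin N, c := fun c => by simp
      rw [hc, hc]
      simp only [← Finset.prod_mul_distrib]
      exact Finset.prod_congr rfl fun k _ => single_eps a b _ M _ _ (eps_or _ _) ha hb hb2
        (hz _) (hden _) (hA _) (hx1 k) (hxM k)
    rw [hpair, prod_eps]
    simp only [mul_one, Finset.prod_const, card_lt M _ (hxM _) (hx1 _), card_ge M _ (hxM _),
      Finset.card_univ, Fintype.card_fin] at hsingle ⊢
    have hDD : ∏ p ∈ Finset.univ.filter (fun p : Fin N × Fin N => p.1 < p.2),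
        ((a ^ (2:ℤ) + a ^ (-2:ℤ) - z p.1 ^ (2:ℤ) - z p.1 ^ (-2:ℤ)) *
         (a ^ (2:ℤ) + a ^ (-2:ℤ) - z p.2 ^ (2:ℤ) - z p.2 ^ (-2:ℤ))) /
        ((a ^ (2:ℤ) - a ^ (-2:ℤ)) ^ 2 *
         (z p.2 ^ (2:ℤ) + z p.2 ^ (-2:ℤ) - z p.1 ^ (2:ℤ) - z p.1 ^ (-2:ℤ))) =
        ∏ p ∈ Finset.univ.filter (fun p : Fin N × Fin N => p.1 < p.2), DD a (z p.1) (z p.2) := rfl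
    have hPR : ∏ p ∈ Finset.univ.filter (fun p : Fin N × Fin N => p.1 < p.2),
      (1 - 2 * Delta a * qq a (z (σ p.1)) ^ eps τ (σ p.1)
          + qq a (z (σ p.1)) ^ eps τ (σ p.1) * qq a (z (σ p.2)) ^ (-(eps τ (σ p.2)))) *
      (1 - 2 * Delta a * qq a (z (σ p.2)) ^ eps τ (σ p.2)
          + qq a (z (σ p.1)) ^ eps τ (σ p.1) * qq a (z (σ p.2)) ^ eps τ (σ p.2)) *
      qq a (z (σ p.1)) ^ (-(eps τ (σ p.1))) =
        ∏ p ∈ Finset.univ.filter (fun p : Fin N × Fin N => p.1 < p.2),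
          PR a (qq a (z (σ p.1)) ^ eps τ (σ p.1)) (qq a (z (σ p.2)) ^ eps τ (σ p.2)) := by
      refine Finset.prod_congr rfl fun p _ => ?_
      rw [PR, zpow_neg, zpow_neg]
    have hsplit : ∏ j, (-(a ^ (2:ℤ) * z j ^ (2:ℤ)) + a ^ (-2:ℤ) * z j ^ (-2:ℤ)) *
        (a ^ (2:ℤ) + a ^ (-2:ℤ) - z j ^ (2:ℤ) - z j ^ (-2:ℤ)) ^ M /
        (z j ^ (2:ℤ) - z j ^ (-2:ℤ)) =
        (∏ j, (-(a ^ (2:ℤ) * z j ^ (2:ℤ)) + a ^ (-2:ℤ) * z j ^ (-2:ℤ))) *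
        ∏ j, (a ^ (2:ℤ) + a ^ (-2:ℤ) - z j ^ (2:ℤ) - z j ^ (-2:ℤ)) ^ M /
        (z j ^ (2:ℤ) - z j ^ (-2:ℤ)) := by
      rw [← Finset.prod_mul_distrib]
      exact Finset.prod_congr rfl fun p _ => mul_div_assoc _ _ _
    rw [hDD, hPR, hsplit]
    generalize (∏ j, (-(a ^ (2:ℤ) * z j ^ (2:ℤ)) + a ^ (-2:ℤ) * z j ^ (-2:ℤ))) = P1
    generalize ((Equiv.Perm.sign σ : ℤ) : ℂ) = S
    generalize ∏ p ∈ Finset.univ.filter (fun p : Fin N × Fin N => p.1 < p.2),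
      DD a (z p.1) (z p.2) = P2
    generalize ∏ p ∈ Finset.univ.filter (fun p : Fin N × Fin N => p.1 < p.2),
          PR a (qq a (z (σ p.1)) ^ eps τ (σ p.1)) (qq a (z (σ p.2)) ^ eps τ (σ p.2)) = P3
    generalize (∏ j, (z j ^ (2 * eps τ j) - z j ^ (-(2 * eps τ j)))⁻¹) = X1 at *
    generalize (∏ k, (b * a⁻¹ * z (σ k) ^ (-(eps τ (σ k))) - b⁻¹ * a * z (σ k) ^ (eps τ (σ k))))
      = X2 at *
    generalize (∏ k, (a * z (σ k) ^ (-(eps τ (σ k))) - a⁻¹ * z (σ k) ^ (eps τ (σ k))) ^ M)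
      = X3 at *
    generalize (∏ k : Fin N, (a * z (σ k) ^ (-(eps τ (σ k))) - a⁻¹ * z (σ k) ^ (eps τ (σ k)))
          ^ (x k.val - 1)) = X4 at *
    generalize (∏ k : Fin N, (a * z (σ k) ^ (eps τ (σ k)) - a⁻¹ * z (σ k) ^ (-(eps τ (σ k))))
          ^ (M - x k.val)) = X5 at *
    generalize (∏ j, (a ^ (2:ℤ) + a ^ (-2:ℤ) - z j ^ (2:ℤ) - z j ^ (-2:ℤ)) ^ M /
          (z j ^ (2:ℤ) - z j ^ (-2:ℤ))) = X6 at *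
    generalize (a ^ (2:ℤ) - a ^ (-2:ℤ)) ^ N = X7 at *
    generalize (b - b⁻¹) ^ N = X8 at *
    generalize (∏ j, ((eps τ j : ℤ) : ℂ)) = X9 at *
    linear_combination P1 * P2 * P3 * S * hsingle
  · push Not at hA
    obtain ⟨j, hj⟩ := hA
    have hj0 : -(a ^ (2:ℤ) * z j ^ (2:ℤ)) + a ^ (-2:ℤ) * z j ^ (-2:ℤ) = 0 := by
      have e : a ^ (2:ℤ) = a ^ 2 := by norm_cast
      have e' : z j ^ (2:ℤ) = z j ^ 2 := by norm_cast
      rw [zpow_neg, zpow_neg, e, e']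
      linear_combination (-(a * z j) - a⁻¹ * (z j)⁻¹) * hj
    unfold FF
    rw [Finset.prod_eq_zero (Finset.mem_univ j) hj0,
      Finset.prod_eq_zero (Finset.mem_univ j)
        (by rw [hj0]; simp : (-(a ^ (2:ℤ) * z j ^ (2:ℤ)) + a ^ (-2:ℤ) * z j ^ (-2:ℤ)) *
        (a ^ (2:ℤ) + a ^ (-2:ℤ) - z j ^ (2:ℤ) - z j ^ (-2:ℤ)) ^ M /
        (z j ^ (2:ℤ) - z j ^ (-2:ℤ)) = 0)]
    simp
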